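/- arXiv:1108.5930 — 2 statements merged into one kernel-verified Lean document; each statement's English description precedes it below -/
import Mathlib

section
/- (Sturm's lemma, Farkas lemma for SDP.) A linear pencil L is strongly infeasible if and only if −1 belongs to the convex cone C_L associated to L. -/
open MvPolynomial Matrix

/-- The linear pencil `L = A 0 + X 1 * A 1 + ... + X n * A n` as a symmetric matrix
with entries in the polynomial ring `ℝ[X 1, ..., X n]`. -/
noncomputable def pencilPoly {n m : ℕ} (A : Fin (n+1) → Matrix (Fin m) (Fin m) ℝ) :
    Matrix (Fin m) (Fin m) (MvPolynomial (Fin n) ℝ) :=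
  fun a b => MvPolynomial.C (A 0 a b) + ∑ i : Fin n, MvPolynomial.X i * MvPolynomial.C (A i.succ a b)

/-- Evaluation of the pencil at a point `x ∈ ℝⁿ`. -/
def pencilEval {n m : ℕ} (A : Fin (n+1) → Matrix (Fin m) (Fin m) ℝ) (x : Fin n → ℝ) :
    Matrix (Fin m) (Fin m) ℝ :=
  A 0 + ∑ i : Fin n, x i • A i.succ

/-- The spectrahedron `S_L = {x ∈ ℝⁿ ∣ L(x) ⪰ 0}`. -/
def specSet {n m : ℕ} (A : Fin (n+1) → Matrix (Fin m) (Fin m) ℝ) : Set (Fin n → ℝ) :=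
  {x | (pencilEval A x).PosSemidef}

/-- `vᵀ L v` for a vector `v` of polynomials. -/
noncomputable def vLv {n m : ℕ} (A : Fin (n+1) → Matrix (Fin m) (Fin m) ℝ)
    (v : Fin m → MvPolynomial (Fin n) ℝ) : MvPolynomial (Fin n) ℝ :=
  ∑ a : Fin m, ∑ b : Fin m, v a * pencilPoly A a b * v b

/-- Membership in the quadratic module `M_L` associated to the pencil `L`:
`p = s + Σⱼ vⱼᵀ L vⱼ` with `s` a sum of squares. -/
def memQM {n m : ℕ} (A : Fin (n+1) → Matrix (Fin m) (Fin m) ℝ)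
    (p : MvPolynomial (Fin n) ℝ) : Prop :=
  ∃ (k r : ℕ) (q : Fin k → MvPolynomial (Fin n) ℝ)
    (v : Fin r → Fin m → MvPolynomial (Fin n) ℝ),
    p = ∑ i, (q i)^2 + ∑ j, vLv A (v j)

/-- The Frobenius distance between two real matrices. (All norms on the finite-dimensional
space of symmetric matrices are equivalent, so positivity of the distance between two sets
does not depend on the choice of norm.) -/
noncomputable def frobDist {m : ℕ} (M N : Matrix (Fin m) (Fin m) ℝ) : ℝ :=
  Real.sqrt (∑ a, ∑ b, (M a b - N a b)^2)

/-- A linear pencil `L` is strongly infeasible if the distance between the affine set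
`{L(x) ∣ x ∈ ℝⁿ}` and the cone of positive semidefinite matrices is strictly positive. -/
def stronglyInfeasible {n m : ℕ} (A : Fin (n+1) → Matrix (Fin m) (Fin m) ℝ) : Prop :=
  ∃ ε > (0:ℝ), ∀ (x : Fin n → ℝ) (B : Matrix (Fin m) (Fin m) ℝ), B.PosSemidef →
    ε ≤ frobDist (pencilEval A x) B

/-- Membership in the convex cone `C_L = {c + Σᵢ uᵢᵀ L uᵢ ∣ c ≥ 0, uᵢ ∈ ℝᵐ}`. -/
def memC {n m : ℕ} (A : Fin (n+1) → Matrix (Fin m) (Fin m) ℝ)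
    (p : MvPolynomial (Fin n) ℝ) : Prop :=
  ∃ (c : ℝ), 0 ≤ c ∧ ∃ (k : ℕ) (u : Fin k → Fin m → ℝ),
    p = MvPolynomial.C c +
      ∑ i, ∑ a, ∑ b, MvPolynomial.C (u i a) * pencilPoly A a b * MvPolynomial.C (u i b)

theorem eval_pencilPoly {n m : ℕ} (A : Fin (n+1) → Matrix (Fin m) (Fin m) ℝ)
    (x : Fin n → ℝ) (a b : Fin m) :
    MvPolynomial.eval x (pencilPoly A a b) = pencilEval A x a b := by
  simp [pencilPoly, pencilEval, Matrix.add_apply, Matrix.sum_apply]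

theorem pencilEval_convex_combination {n m : ℕ} (A : Fin (n+1) → Matrix (Fin m) (Fin m) ℝ)
    (x y : Fin n → ℝ) {s t : ℝ} (hst : s + t = 1) :
    pencilEval A (s • x + t • y) = s • pencilEval A x + t • pencilEval A y := by
  have h : A 0 = s • A 0 + t • A 0 := by rw [← add_smul, hst, one_smul]
  simp only [pencilEval, Pi.add_apply, Pi.smul_apply, smul_eq_mul, add_smul, mul_smul,
    Finset.sum_add_distrib, smul_add, Finset.smul_sum]
  nth_rewrite 1 [h]
  abel

theorem pencilEval_isSymm {n m : ℕ} {A : Fin (n+1) → Matrix (Fin m) (Fin m) ℝ}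
    (hsymm : ∀ i, (A i).IsSymm) (x : Fin n → ℝ) : (pencilEval A x).IsSymm := by
  ext a b
  simp [pencilEval, Matrix.sum_apply, (hsymm _).apply]

theorem sum_mul_apply_mul_nonneg {m : ℕ} {B : Matrix (Fin m) (Fin m) ℝ} (hB : B.PosSemidef)
    (u : Fin m → ℝ) : 0 ≤ ∑ a, ∑ b, u a * B a b * u b := by
  have h := hB.dotProduct_mulVec_nonneg u
  simpa [dotProduct, mulVec, Finset.mul_sum, mul_assoc] using h

/-- A pairing of matrices that takes the value at least `1` on a difference bounds the
Frobenius distance from below. -/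
theorem inv_le_frobDist {m : ℕ} (U M B : Matrix (Fin m) (Fin m) ℝ)
    (h : 1 ≤ ∑ a, ∑ b, U a b * (B a b - M a b)) :
    (Real.sqrt (∑ a, ∑ b, (U a b) ^ 2) + 1)⁻¹ ≤ frobDist M B := by
  have hcs := Real.sum_mul_le_sqrt_mul_sqrt (Finset.univ : Finset (Fin m × Fin m))
    (fun p => U p.1 p.2) (fun p => B p.1 p.2 - M p.1 p.2)
  simp only [Fintype.sum_prod_type] at hcs
  have hd : Real.sqrt (∑ a, ∑ b, (B a b - M a b) ^ 2) = frobDist M B := by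
    simp only [frobDist, fun a b => sub_sq_comm (B a b) (M a b)]
  rw [hd] at hcs
  have h0 : 0 ≤ frobDist M B := Real.sqrt_nonneg _
  have h1 := Real.sqrt_nonneg (∑ a, ∑ b, (U a b) ^ 2)
  rw [inv_le_iff_one_le_mul₀ (by positivity)]
  nlinarith

theorem stronglyInfeasible_of_memC {n m : ℕ} {A : Fin (n+1) → Matrix (Fin m) (Fin m) ℝ}
    (h : memC A (-1)) : stronglyInfeasible A := by
  obtain ⟨c, hc, k, u, hu⟩ := h
  let U : Matrix (Fin m) (Fin m) ℝ := fun a b => ∑ i, u i a * u i b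
  have key (M : Matrix (Fin m) (Fin m) ℝ) :
      ∑ a, ∑ b, U a b * M a b = ∑ i, ∑ a, ∑ b, u i a * M a b * u i b := by
    rw [Finset.sum_comm]
    simp only [U, Finset.sum_mul]
    rw [Finset.sum_comm]
    simp_rw [Finset.sum_comm (s := (Finset.univ : Finset (Fin m)))
      (t := (Finset.univ : Finset (Fin k)))]
    refine Finset.sum_congr rfl fun i _ => Finset.sum_congr rfl fun a _ =>
      Finset.sum_congr rfl fun b _ => by ring
  refine ⟨(Real.sqrt (∑ a, ∑ b, (U a b) ^ 2) + 1)⁻¹, by positivity, fun x B hB => ?_⟩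
  apply inv_le_frobDist
  have hx := congrArg (MvPolynomial.eval x) hu
  simp only [map_neg, map_one, map_add, map_sum, map_mul, MvPolynomial.eval_C,
    eval_pencilPoly] at hx
  have hBu : 0 ≤ ∑ i, ∑ a, ∑ b, u i a * B a b * u i b :=
    Finset.sum_nonneg fun i _ => sum_mul_apply_mul_nonneg hB (u i)
  simp only [mul_sub, Finset.sum_sub_distrib, key]
  linarith

/-- The set of differences `L(x) - B` with `B` positive semidefinite. -/
def pencilSubPosSemidef {n m : ℕ} (A : Fin (n+1) → Matrix (Fin m) (Fin m) ℝ) :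
    Set (Fin m → Fin m → ℝ) :=
  {M | ∃ (x : Fin n → ℝ) (B : Matrix (Fin m) (Fin m) ℝ),
    B.PosSemidef ∧ M = pencilEval A x - B}

theorem convex_pencilSubPosSemidef {n m : ℕ} (A : Fin (n+1) → Matrix (Fin m) (Fin m) ℝ) :
    Convex ℝ (pencilSubPosSemidef A) := by
  rintro _ ⟨x, B, hB, rfl⟩ _ ⟨y, D, hD, rfl⟩ s t hs ht hst
  refine ⟨s • x + t • y, s • B + t • D, (hB.smul hs).add (hD.smul ht), ?_⟩
  rw [pencilEval_convex_combination A x y hst]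
  change s • (pencilEval A x - B) + t • (pencilEval A y - D) = _
  module

theorem zero_notMem_closure_pencilSubPosSemidef {n m : ℕ}
    {A : Fin (n+1) → Matrix (Fin m) (Fin m) ℝ} (h : stronglyInfeasible A) :
    (0 : Fin m → Fin m → ℝ) ∉ closure (pencilSubPosSemidef A) := by
  obtain ⟨ε, hε, h⟩ := h
  have hcl : IsClosed {M : Fin m → Fin m → ℝ | ε ≤ Real.sqrt (∑ a, ∑ b, (M a b) ^ 2)} :=
    isClosed_le continuous_const (by fun_prop)
  have hsub : pencilSubPosSemidef A ⊆
      {M : Fin m → Fin m → ℝ | ε ≤ Real.sqrt (∑ a, ∑ b, (M a b) ^ 2)} := by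
    rintro _ ⟨x, B, hB, rfl⟩
    exact h x B hB
  intro h0
  have := closure_minimal hsub hcl h0
  simp at this
  linarith

/-- Separation of a strongly infeasible pencil from the cone of positive semidefinite matrices. -/
theorem exists_separating_linearMap {n m : ℕ} {A : Fin (n+1) → Matrix (Fin m) (Fin m) ℝ}
    (h : stronglyInfeasible A) :
    ∃ g : Matrix (Fin m) (Fin m) ℝ →ₗ[ℝ] ℝ, (∀ B, B.PosSemidef → 0 ≤ g B) ∧
      ∀ x, g (pencilEval A x) = -1 := by
  obtain ⟨f', u, hu, hf'⟩ := geometric_hahn_banach_point_closed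
    (convex_pencilSubPosSemidef A).closure isClosed_closure
    (zero_notMem_closure_pencilSubPosSemidef h)
  let f : Matrix (Fin m) (Fin m) ℝ →ₗ[ℝ] ℝ := f'.toLinearMap
  have hu : 0 < u := by simpa using hu
  have hf (x : Fin n → ℝ) (B : Matrix (Fin m) (Fin m) ℝ) (hB : B.PosSemidef) :
      u < f (pencilEval A x) - f B := by
    rw [← map_sub]
    exact hf' _ (subset_closure ⟨x, B, hB, rfl⟩)
  have hpos (x : Fin n → ℝ) : 0 < f (pencilEval A x) := by
    have := hf x 0 Matrix.PosSemidef.zero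
    rw [map_zero] at this
    linarith
  have heval (x : Fin n → ℝ) :
      f (pencilEval A x) = f (A 0) + ∑ i, x i * f (A i.succ) := by
    simp [pencilEval]
  have h0 : 0 < f (A 0) := by simpa [heval] using hpos 0
  have hsucc (i : Fin n) : f (A i.succ) = 0 := by
    by_contra hi
    have := hpos (Pi.single i (-f (A 0) / f (A i.succ)))
    simp [heval, Pi.single_apply, div_mul_cancel₀ _ hi] at this
  have hconst (x : Fin n → ℝ) : f (pencilEval A x) = f (A 0) := by simp [heval, hsucc]
  refine ⟨(-(f (A 0))⁻¹) • f, fun B hB => ?_, fun x => ?_⟩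
  · have hB0 : f B ≤ 0 := by
      by_contra! hlt
      have := hf 0 ((f (A 0) / f B) • B) (hB.smul (by positivity))
      rw [map_smul, smul_eq_mul, div_mul_cancel₀ _ hlt.ne', hconst] at this
      linarith
    have : 0 < (f (A 0))⁻¹ := inv_pos.mpr h0
    simp only [LinearMap.smul_apply, smul_eq_mul]
    nlinarith
  · simp [hconst, h0.ne']

open scoped MatrixOrder in
/-- A linear functional that is nonnegative on positive semidefinite matrices is, on symmetric
matrices, a sum of evaluations of the quadratic form. -/
theorem exists_vectors_of_nonneg_on_posSemidef {m : ℕ}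
    (g : Matrix (Fin m) (Fin m) ℝ →ₗ[ℝ] ℝ) (hg : ∀ B, B.PosSemidef → 0 ≤ g B) :
    ∃ u : Fin m → Fin m → ℝ, ∀ M : Matrix (Fin m) (Fin m) ℝ, M.IsSymm →
      ∑ i, ∑ a, ∑ b, u i a * M a b * u i b = g M := by
  have hgsum (M : Matrix (Fin m) (Fin m) ℝ) :
      g M = ∑ a, ∑ b, M a b * g (Matrix.single a b 1) := by
    conv_lhs => rw [Matrix.matrix_eq_sum_single M]
    simp only [map_sum]
    refine Finset.sum_congr rfl fun a _ => Finset.sum_congr rfl fun b _ => ?_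
    rw [← smul_eq_mul, ← map_smul, Matrix.smul_single, smul_eq_mul, mul_one]
  let H : Matrix (Fin m) (Fin m) ℝ :=
    fun a b => (g (Matrix.single a b 1) + g (Matrix.single b a 1)) / 2
  have hH (M : Matrix (Fin m) (Fin m) ℝ) (hM : M.IsSymm) :
      ∑ a, ∑ b, M a b * H a b = g M := by
    have hswap : g M = ∑ a, ∑ b, M a b * g (Matrix.single b a 1) := by
      rw [hgsum, Finset.sum_comm]
      simp only [hM.apply]
    have hsplit : ∑ a, ∑ b, M a b * H a b =
        ((∑ a, ∑ b, M a b * g (Matrix.single a b 1)) +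
          ∑ a, ∑ b, M a b * g (Matrix.single b a 1)) / 2 := by
      simp only [H, ← Finset.sum_add_distrib, Finset.sum_div]
      refine Finset.sum_congr rfl fun a _ => Finset.sum_congr rfl fun b _ => by ring
    rw [hsplit, ← hgsum, ← hswap]
    ring
  have hHpsd : H.PosSemidef := by
    refine Matrix.PosSemidef.of_dotProduct_mulVec_nonneg ?_ fun v => ?_
    · ext a b
      rw [Matrix.conjTranspose_apply]
      simp [H, add_comm]
    · have hv := hg _ (Matrix.posSemidef_vecMulVec_self_star v)
      rw [← hH] at hv
      · refine hv.trans_eq ?_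
        simp only [dotProduct, mulVec, Finset.mul_sum, vecMulVec_apply, Pi.star_apply, star_trivial]
        refine Finset.sum_congr rfl fun a _ => Finset.sum_congr rfl fun b _ => by ring
      · ext a b
        simp [vecMulVec_apply, mul_comm]
  obtain ⟨D, hD⟩ := CStarAlgebra.nonneg_iff_eq_star_mul_self.mp hHpsd.nonneg
  refine ⟨D, fun M hM => ?_⟩
  rw [← hH M hM, Finset.sum_comm]
  refine Finset.sum_congr rfl fun a _ => ?_
  rw [Finset.sum_comm]
  refine Finset.sum_congr rfl fun b _ => ?_
  simp only [hD, Matrix.star_eq_conjTranspose, Matrix.mul_apply, Matrix.conjTranspose_apply, star_trivial, Finset.mul_sum]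
  exact Finset.sum_congr rfl fun i _ => by ring

theorem memC_of_stronglyInfeasible {n m : ℕ} {A : Fin (n+1) → Matrix (Fin m) (Fin m) ℝ}
    (hsymm : ∀ i, (A i).IsSymm) (h : stronglyInfeasible A) : memC A (-1) := by
  obtain ⟨g, hg, hgA⟩ := exists_separating_linearMap h
  obtain ⟨u, hu⟩ := exists_vectors_of_nonneg_on_posSemidef g hg
  refine ⟨0, le_rfl, m, u, MvPolynomial.funext fun x => ?_⟩
  simp only [map_neg, map_one, map_add, map_sum, map_mul, MvPolynomial.eval_C,
    eval_pencilPoly, zero_add, hu _ (pencilEval_isSymm hsymm x), hgA]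

/-- **Sturm's lemma (Farkas' lemma for SDP).** A linear pencil `L` is strongly infeasible
if and only if `-1 ∈ C_L`. -/
theorem stronglyInfeasible_iff_neg_one_mem_cone
    (n m : ℕ) (A : Fin (n+1) → Matrix (Fin m) (Fin m) ℝ)
    (hsymm : ∀ i, (A i).IsSymm) :
    stronglyInfeasible A ↔ memC A (-1) := by
  exact ⟨memC_of_stronglyInfeasible hsymm, stronglyInfeasible_of_memC⟩
end

section
/- (Putinar-type Positivstellensatz for bounded spectrahedra.) Let L be a linear pencil with bounded spectrahedron S_L. If f ∈ ℝ[X₁,…,Xₙ] satisfies f(x) > 0 for all x ∈ S_L, then f ∈ M_L. -/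
open MvPolynomial Matrix

/-- A quadratic module of a commutative ring: it contains `1` and is closed under addition and
under multiplication by squares. -/
structure IsQuadraticModule {R : Type*} [CommRing R] (M : Set R) : Prop where
  one_mem : 1 ∈ M
  add_mem : ∀ {a b}, a ∈ M → b ∈ M → a + b ∈ M
  sq_mul_mem : ∀ (h : R) {a}, a ∈ M → h ^ 2 * a ∈ M

/-- A quadratic module is archimedean if every element is bounded above by a real constant. -/
def IsArchimedeanModule {R : Type*} [CommRing R] [Algebra ℝ R] (M : Set R) : Prop :=
  ∀ a, ∃ N : ℝ, algebraMap ℝ R N - a ∈ M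

namespace IsQuadraticModule

variable {R : Type*} [CommRing R] {M : Set R}

theorem zero_mem (hM : IsQuadraticModule M) : (0 : R) ∈ M := by
  simpa using hM.sq_mul_mem 0 hM.one_mem

theorem sq_mem (hM : IsQuadraticModule M) (h : R) : h ^ 2 ∈ M := by
  simpa using hM.sq_mul_mem h hM.one_mem

theorem sumSq_mul_mem (hM : IsQuadraticModule M) {s a : R} (hs : IsSumSq s) (ha : a ∈ M) :
    s * a ∈ M := by
  induction hs with
  | zero => simpa using hM.zero_mem
  | sq_add b _ ih =>
    have := hM.add_mem (hM.sq_mul_mem b ha) ih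
    rwa [pow_two, ← add_mul] at this

theorem sumSq_mem (hM : IsQuadraticModule M) {s : R} (hs : IsSumSq s) : s ∈ M := by
  simpa using hM.sumSq_mul_mem hs hM.one_mem

/-- The quadratic module generated by `M` and one further element. -/
theorem adjoin (hM : IsQuadraticModule M) (f : R) :
    IsQuadraticModule {p : R | ∃ q ∈ M, ∃ s, IsSumSq s ∧ p = q + s * f} where
  one_mem := ⟨1, hM.one_mem, 0, .zero, by simp⟩
  add_mem := by
    rintro _ _ ⟨q, hq, s, hs, rfl⟩ ⟨q', hq', s', hs', rfl⟩
    exact ⟨q + q', hM.add_mem hq hq', s + s', hs.add hs', by ring⟩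
  sq_mul_mem := by
    rintro h _ ⟨q, hq, s, hs, rfl⟩
    refine ⟨h ^ 2 * q, hM.sq_mul_mem h hq, h * h * s, (IsSumSq.mul_self h).mul hs, by ring⟩

/-- The sum of a quadratic module and an ideal. -/
theorem add_ideal (hM : IsQuadraticModule M) (I : Ideal R) :
    IsQuadraticModule {p : R | ∃ q ∈ M, ∃ j ∈ I, p = q + j} where
  one_mem := ⟨1, hM.one_mem, 0, I.zero_mem, by simp⟩
  add_mem := by
    rintro _ _ ⟨q, hq, s, hs, rfl⟩ ⟨q', hq', s', hs', rfl⟩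
    exact ⟨q + q', hM.add_mem hq hq', s + s', I.add_mem hs hs', by ring⟩
  sq_mul_mem := by
    rintro h _ ⟨q, hq, s, hs, rfl⟩
    exact ⟨h ^ 2 * q, hM.sq_mul_mem h hq, h ^ 2 * s, I.mul_mem_left _ hs, by ring⟩

theorem exists_maximal (hM : IsQuadraticModule M) (h1 : -1 ∉ M) :
    ∃ Q, M ⊆ Q ∧ Maximal (fun Q : Set R => IsQuadraticModule Q ∧ -1 ∉ Q) Q := by
  refine zorn_subset_nonempty {Q : Set R | IsQuadraticModule Q ∧ -1 ∉ Q} ?_ M ⟨hM, h1⟩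
  intro c hcS hc ⟨Q₀, hQ₀⟩
  refine ⟨⋃₀ c, ⟨⟨⟨Q₀, hQ₀, (hcS hQ₀).1.one_mem⟩, ?_, ?_⟩, ?_⟩, fun s hs =>
    Set.subset_sUnion_of_mem hs⟩
  · rintro a b ⟨P, hP, haP⟩ ⟨Q, hQ, hbQ⟩
    rcases hc.total hP hQ with h | h
    · exact ⟨Q, hQ, (hcS hQ).1.add_mem (h haP) hbQ⟩
    · exact ⟨P, hP, (hcS hP).1.add_mem haP (h hbQ)⟩
  · rintro h a ⟨P, hP, haP⟩
    exact ⟨P, hP, (hcS hP).1.sq_mul_mem h haP⟩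
  · rintro ⟨P, hP, h⟩
    exact (hcS hP).2 h

variable [Algebra ℝ R]

theorem algebraMap_mul_mem (hM : IsQuadraticModule M) {c : ℝ} (hc : 0 ≤ c) {a : R} (ha : a ∈ M) :
    algebraMap ℝ R c * a ∈ M := by
  have := hM.sq_mul_mem (algebraMap ℝ R (Real.sqrt c)) ha
  rwa [← map_pow, Real.sq_sqrt hc] at this

theorem smul_mem (hM : IsQuadraticModule M) {c : ℝ} (hc : 0 ≤ c) {a : R} (ha : a ∈ M) :
    c • a ∈ M := by
  rw [Algebra.smul_def]
  exact hM.algebraMap_mul_mem hc ha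

theorem algebraMap_mem (hM : IsQuadraticModule M) {c : ℝ} (hc : 0 ≤ c) : algebraMap ℝ R c ∈ M := by
  simpa using hM.algebraMap_mul_mem hc hM.one_mem

theorem neg_one_mem_of_algebraMap_mem (hM : IsQuadraticModule M) {c : ℝ} (hc : c < 0)
    (h : algebraMap ℝ R c ∈ M) : -1 ∈ M := by
  have := hM.algebraMap_mul_mem (c := (-c)⁻¹) (by simpa using hc.le) h
  rw [← map_mul, inv_neg, neg_mul, inv_mul_cancel₀ hc.ne] at this
  simpa using this

theorem half_add_half : algebraMap ℝ R (1 / 2) + algebraMap ℝ R (1 / 2) = 1 := by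
  rw [← map_add]; norm_num

/-- Every element is a difference of two squares, since `2` is invertible. -/
theorem eq_sq_sub_sq (a : R) :
    a = (algebraMap ℝ R (1 / 2) * (a + 1)) ^ 2 - (algebraMap ℝ R (1 / 2) * (a - 1)) ^ 2 := by
  have h := half_add_half (R := R)
  linear_combination (-a - a * (algebraMap ℝ R (1 / 2) + algebraMap ℝ R (1 / 2))) * h

theorem mem_of_neg_one_mem (hM : IsQuadraticModule M) (h : -1 ∈ M) (a : R) : a ∈ M := by
  have := hM.add_mem (hM.sq_mem (algebraMap ℝ R (1 / 2) * (a + 1)))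
    (hM.sq_mul_mem (algebraMap ℝ R (1 / 2) * (a - 1)) h)
  rw [eq_sq_sub_sq a]
  rwa [mul_neg_one, ← sub_eq_add_neg] at this

/-- The support `M ∩ -M` of a quadratic module is closed under multiplication. -/
theorem mul_mem_support (hM : IsQuadraticModule M) (b : R) {a : R} (ha : a ∈ M) (ha' : -a ∈ M) :
    b * a ∈ M := by
  have := hM.add_mem (hM.sq_mul_mem (algebraMap ℝ R (1 / 2) * (b + 1)) ha)
    (hM.sq_mul_mem (algebraMap ℝ R (1 / 2) * (b - 1)) ha')
  rw [eq_sq_sub_sq b]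
  convert this using 1
  ring

/-- A maximal proper quadratic module is total. -/
theorem mem_or_neg_mem_of_maximal {Q : Set R}
    (hQ : Maximal (fun Q : Set R => IsQuadraticModule Q ∧ -1 ∉ Q) Q) (a : R) :
    a ∈ Q ∨ -a ∈ Q := by
  have key : ∀ b ∉ Q, ∃ q ∈ Q, ∃ s, IsSumSq s ∧ -1 = q + s * b := by
    intro b hb
    by_contra hcon
    refine hb (hQ.2 (y := {p : R | ∃ q ∈ Q, ∃ s, IsSumSq s ∧ p = q + s * b})
      ⟨hQ.1.1.adjoin b, hcon⟩ ?_ ?_)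
    · exact fun q hq => ⟨q, hq, 0, .zero, by simp⟩
    · exact ⟨0, hQ.1.1.zero_mem, 1, .one, by simp⟩
  by_contra! hcon
  obtain ⟨q, hq, s, hs, e⟩ := key a hcon.1
  obtain ⟨q', hq', s', hs', e'⟩ := key (-a) hcon.2
  have hneg : -s ∈ Q := by
    have := hQ.1.1.add_mem (hQ.1.1.sumSq_mem hs')
      (hQ.1.1.add_mem (hQ.1.1.sumSq_mul_mem hs' hq) (hQ.1.1.sumSq_mul_mem hs hq'))
    convert this using 1
    linear_combination s' * e + s * e'
  apply hQ.1.2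
  rw [e]
  refine hQ.1.1.add_mem hq ?_
  rw [mul_comm]
  exact hQ.1.1.mul_mem_support a (hQ.1.1.sumSq_mem hs) hneg

/-- A maximal proper quadratic module that is archimedean is closed. -/
theorem mem_of_forall_add_mem_of_maximal {Q : Set R} (hA : IsArchimedeanModule Q)
    (hQ : Maximal (fun Q : Set R => IsQuadraticModule Q ∧ -1 ∉ Q) Q) {a : R}
    (ha : ∀ ε : ℝ, 0 < ε → a + algebraMap ℝ R ε ∈ Q) : a ∈ Q := by
  have hQ' := hQ.1.1
  refine hQ.2 (y := {a : R | ∀ ε : ℝ, 0 < ε → a + algebraMap ℝ R ε ∈ Q}) ⟨⟨?_, ?_, ?_⟩, ?_⟩ ?_ ha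
  · exact fun ε hε => hQ'.add_mem hQ'.one_mem (hQ'.algebraMap_mem hε.le)
  · intro a b ha hb ε hε
    have := hQ'.add_mem (ha (ε / 2) (by positivity)) (hb (ε / 2) (by positivity))
    convert this using 1
    rw [show ε = ε / 2 + ε / 2 by ring, map_add]
    ring_nf
  · intro h a ha ε hε
    obtain ⟨N, hN⟩ := hA (h ^ 2)
    have hN' : algebraMap ℝ R (|N| + 1) - h ^ 2 ∈ Q := by
      have := hQ'.add_mem hN (hQ'.algebraMap_mem (c := |N| + 1 - N) (by linarith [le_abs_self N]))
      convert this using 1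
      rw [map_sub]; ring
    have hpos : 0 < |N| + 1 := by positivity
    have h1 := hQ'.sq_mul_mem h (ha (ε / (|N| + 1)) (by positivity))
    have h2 := hQ'.algebraMap_mul_mem (c := ε / (|N| + 1)) (by positivity) hN'
    convert hQ'.add_mem h1 h2 using 1
    have : algebraMap ℝ R ε = algebraMap ℝ R (ε / (|N| + 1)) * algebraMap ℝ R (|N| + 1) := by
      rw [← map_mul, div_mul_cancel₀ _ hpos.ne']
    rw [this]; ring
  · intro h
    refine hQ.1.2 (hQ'.neg_one_mem_of_algebraMap_mem (c := -(1 / 2)) (by norm_num) ?_)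
    convert h (1 / 2) (by norm_num) using 1
    rw [map_neg]
    linear_combination - half_add_half (R := R)
  · exact fun q hq ε hε => hQ'.add_mem hq (hQ'.algebraMap_mem hε.le)

/-- A proper archimedean quadratic module is nonnegative under some real point of the algebra. -/
theorem exists_algHom_nonneg (hM : IsQuadraticModule M) (hA : IsArchimedeanModule M)
    (h1 : -1 ∉ M) : ∃ φ : R →ₐ[ℝ] ℝ, ∀ a ∈ M, 0 ≤ φ a := by
  obtain ⟨Q, hMQ, hQ⟩ := hM.exists_maximal h1
  have hQ' := hQ.1.1
  have hAQ : IsArchimedeanModule Q := fun a => (hA a).imp fun N h => hMQ h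
  have cmem {c : ℝ} (h : algebraMap ℝ R c ∈ Q) : 0 ≤ c :=
    not_lt.1 fun hc => hQ.1.2 (hQ'.neg_one_mem_of_algebraMap_mem hc h)
  have key : ∀ a : R, ∃ r : ℝ, a - algebraMap ℝ R r ∈ Q ∧ algebraMap ℝ R r - a ∈ Q := by
    intro a
    let T : Set ℝ := {r | a - algebraMap ℝ R r ∈ Q}
    obtain ⟨N, hN⟩ := hAQ a
    obtain ⟨N', hN'⟩ := hAQ (-a)
    have hne : T.Nonempty := ⟨-N', by
      change a - algebraMap ℝ R (-N') ∈ Q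
      convert hN' using 1
      rw [map_neg]; ring⟩
    have hbd : BddAbove T := ⟨N, fun r (hr : a - algebraMap ℝ R r ∈ Q) => by
      have : algebraMap ℝ R (N - r) ∈ Q := by
        convert hQ'.add_mem hN hr using 1
        rw [map_sub]; ring
      linarith [cmem this]⟩
    refine ⟨sSup T, ?_, ?_⟩
    · refine mem_of_forall_add_mem_of_maximal hAQ hQ fun ε hε => ?_
      obtain ⟨r, hr, hlt⟩ := exists_lt_of_lt_csSup hne (sub_lt_self (sSup T) hε)
      convert hQ'.add_mem hr (hQ'.algebraMap_mem (c := r - (sSup T - ε)) (by linarith)) using 1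
      rw [map_sub, map_sub]; ring
    · refine mem_of_forall_add_mem_of_maximal hAQ hQ fun ε hε => ?_
      have hnot : a - algebraMap ℝ R (sSup T + ε) ∉ Q := fun h => by
        linarith [le_csSup hbd (show sSup T + ε ∈ T from h)]
      convert (mem_or_neg_mem_of_maximal hQ _).resolve_left hnot using 1
      rw [map_add]; ring
  choose α hα hα' using key
  have uniq (a : R) (r : ℝ) (h : a - algebraMap ℝ R r ∈ Q) (h' : algebraMap ℝ R r - a ∈ Q) :
      α a = r := by
    apply le_antisymm
    · have : algebraMap ℝ R (r - α a) ∈ Q := by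
        convert hQ'.add_mem h' (hα a) using 1
        rw [map_sub]; ring
      linarith [cmem this]
    · have : algebraMap ℝ R (α a - r) ∈ Q := by
        convert hQ'.add_mem h (hα' a) using 1
        rw [map_sub]; ring
      linarith [cmem this]
  have hconst (r : ℝ) : α (algebraMap ℝ R r) = r :=
    uniq _ _ (by simpa using hQ'.zero_mem) (by simpa using hQ'.zero_mem)
  have hmul (a b : R) : α (a * b) = α a * α b := by
    apply uniq
    · convert hQ'.add_mem (hQ'.mul_mem_support b (hα a) (by simpa using hα' a))
        (hQ'.mul_mem_support (algebraMap ℝ R (α a)) (hα b) (by simpa using hα' b)) using 1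
      rw [map_mul]; ring
    · convert hQ'.add_mem (hQ'.mul_mem_support b (hα' a) (by simpa using hα a))
        (hQ'.mul_mem_support (algebraMap ℝ R (α a)) (hα' b) (by simpa using hα b)) using 1
      rw [map_mul]; ring
  have hadd (a b : R) : α (a + b) = α a + α b := by
    apply uniq
    · convert hQ'.add_mem (hα a) (hα b) using 1
      rw [map_add]; ring
    · convert hQ'.add_mem (hα' a) (hα' b) using 1
      rw [map_add]; ring
  refine ⟨AlgHom.mk ⟨⟨⟨α, ?_⟩, hmul⟩, ?_, hadd⟩ hconst, fun a ha => ?_⟩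
  · simpa using hconst 1
  · simpa using hconst 0
  · refine cmem (c := α a) ?_
    convert hQ'.add_mem (hα' a) (hMQ ha) using 1
    ring

/-- The representation theorem for archimedean quadratic modules. -/
theorem mem_of_forall_algHom_pos (hM : IsQuadraticModule M) (hA : IsArchimedeanModule M) {f : R}
    (hf : ∀ φ : R →ₐ[ℝ] ℝ, (∀ a ∈ M, 0 ≤ φ a) → 0 < φ f) : f ∈ M := by
  obtain ⟨q, hq, s, hs, e⟩ : ∃ q ∈ M, ∃ s, IsSumSq s ∧ -1 = q + s * (-f) := by
    by_contra hcon
    have sub : M ⊆ {p : R | ∃ q ∈ M, ∃ s, IsSumSq s ∧ p = q + s * (-f)} :=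
      fun q hq => ⟨q, hq, 0, .zero, by simp⟩
    obtain ⟨φ, hφ⟩ := (hM.adjoin (-f)).exists_algHom_nonneg
      (fun a => (hA a).imp fun N h => sub h) hcon
    have h1 := hf φ fun a ha => hφ a (sub ha)
    have h2 := hφ (-f) ⟨0, hM.zero_mem, 1, .one, by simp⟩
    rw [map_neg] at h2
    linarith
  obtain ⟨N₁, hN₁⟩ := hA s
  obtain ⟨N₂, hN₂⟩ := hA (s ^ 2 * f + 1)
  let k : ℝ := |N₁| + |N₂| + 1
  have hk : 0 < k := by positivity
  have hk₁ : algebraMap ℝ R (2 * k) - s ∈ M := by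
    convert hM.add_mem hN₁ (hM.algebraMap_mem (c := 2 * k - N₁)
      (by simp only [k]; linarith [le_abs_self N₁, abs_nonneg N₁, abs_nonneg N₂])) using 1
    rw [map_sub]; ring
  have hk₂ : algebraMap ℝ R (2 * k) - (s ^ 2 * f + 1) ∈ M := by
    convert hM.add_mem hN₂ (hM.algebraMap_mem (c := 2 * k - N₂)
      (by simp only [k]; linarith [le_abs_self N₂, abs_nonneg N₁, abs_nonneg N₂])) using 1
    rw [map_sub]; ring
  have step (r : ℝ) (hr : 0 ≤ r) (h : f + algebraMap ℝ R r ∈ M) :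
      f + algebraMap ℝ R (r - 1 / k ^ 2) ∈ M := by
    have h1 := hM.sq_mul_mem (algebraMap ℝ R k - s) h
    have h2 := hM.algebraMap_mul_mem (c := 2 * k) (by positivity) hq
    have h3 := hM.algebraMap_mul_mem hr (hM.sumSq_mul_mem hs hk₁)
    have h4 := hM.algebraMap_mul_mem (c := 1 / k ^ 2) (by positivity)
      (hM.add_mem (hM.add_mem h1 h2) (hM.add_mem h3 hk₂))
    convert h4 using 1
    have hq' : q = s * f - 1 := by linear_combination -e
    have hinv : algebraMap ℝ R (1 / k ^ 2) * algebraMap ℝ R k ^ 2 = 1 := by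
      rw [← map_pow, ← map_mul, one_div, inv_mul_cancel₀ (by positivity), map_one]
    rw [hq', map_sub, map_mul, map_ofNat]
    linear_combination (-f - algebraMap ℝ R r) * hinv
  obtain ⟨r₀, hr₀⟩ := hA (-f)
  have hstart : f + algebraMap ℝ R |r₀| ∈ M := by
    convert hM.add_mem hr₀ (hM.algebraMap_mem (c := |r₀| - r₀)
      (by linarith [le_abs_self r₀])) using 1
    rw [map_sub]; ring
  by_contra hfM
  have hall (j : ℕ) : f + algebraMap ℝ R (|r₀| - j * (1 / k ^ 2)) ∈ M := by
    induction j with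
    | zero => simpa using hstart
    | succ j ih =>
      rcases le_or_gt 0 (|r₀| - j * (1 / k ^ 2)) with h | h
      · convert step _ h ih using 3
        push_cast; ring
      · refine absurd ?_ hfM
        convert hM.add_mem ih (hM.algebraMap_mem (neg_nonneg.2 h.le)) using 1
        rw [map_neg]; ring
  obtain ⟨j, hj⟩ := exists_nat_gt (|r₀| / (1 / k ^ 2))
  rw [div_lt_iff₀ (by positivity)] at hj
  apply hfM
  convert hM.add_mem (hall j) (hM.algebraMap_mem (c := -(|r₀| - j * (1 / k ^ 2)))
    (by linarith)) using 1
  rw [map_neg]; ring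

theorem sub_sq_mem (hM : IsQuadraticModule M) {a : R} {N : ℝ} (hN : 0 < N)
    (h : algebraMap ℝ R N - a ∈ M) (h' : algebraMap ℝ R N + a ∈ M) :
    algebraMap ℝ R (N ^ 2) - a ^ 2 ∈ M := by
  have h1 := hM.add_mem (hM.sq_mul_mem (algebraMap ℝ R N + a) h)
    (hM.sq_mul_mem (algebraMap ℝ R N - a) h')
  convert hM.algebraMap_mul_mem (c := 1 / (2 * N)) (by positivity) h1 using 1
  have hinv : algebraMap ℝ R (1 / (2 * N)) * (2 * algebraMap ℝ R N) = 1 := by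
    rw [← map_ofNat (algebraMap ℝ R) 2, ← map_mul, ← map_mul, one_div,
      inv_mul_cancel₀ (by positivity), map_one]
  rw [map_pow]
  linear_combination (-(algebraMap ℝ R N ^ 2 - a ^ 2)) * hinv

/-- The elements bounded by real constants modulo a quadratic module form a subalgebra. -/
def boundedSubalgebra (hM : IsQuadraticModule M) : Subalgebra ℝ R :=
  have hneg : ∀ a, (∃ N : ℝ, 0 < N ∧ algebraMap ℝ R N - a ∈ M ∧ algebraMap ℝ R N + a ∈ M) →
      ∃ N : ℝ, 0 < N ∧ algebraMap ℝ R N - -a ∈ M ∧ algebraMap ℝ R N + -a ∈ M :=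
    fun a ⟨N, h0, h, h'⟩ => ⟨N, h0, by simpa using h', by simpa [← sub_eq_add_neg] using h⟩
  have hadd : ∀ a b, (∃ N : ℝ, 0 < N ∧ algebraMap ℝ R N - a ∈ M ∧ algebraMap ℝ R N + a ∈ M) →
      (∃ N : ℝ, 0 < N ∧ algebraMap ℝ R N - b ∈ M ∧ algebraMap ℝ R N + b ∈ M) →
      ∃ N : ℝ, 0 < N ∧ algebraMap ℝ R N - (a + b) ∈ M ∧ algebraMap ℝ R N + (a + b) ∈ M :=
    fun a b ⟨N, h0, h, h'⟩ ⟨N₂, h0₂, h₂, h₂'⟩ => ⟨N + N₂, by positivity, by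
      convert hM.add_mem h h₂ using 1
      rw [map_add]; ring, by
      convert hM.add_mem h' h₂' using 1
      rw [map_add]; ring⟩
  have hsq : ∀ a, (∃ N : ℝ, 0 < N ∧ algebraMap ℝ R N - a ∈ M ∧ algebraMap ℝ R N + a ∈ M) →
      ∃ N : ℝ, 0 < N ∧ algebraMap ℝ R N - a ^ 2 ∈ M ∧ algebraMap ℝ R N + a ^ 2 ∈ M :=
    fun a ⟨N, h0, h, h'⟩ => ⟨N ^ 2, by positivity, hM.sub_sq_mem h0 h h',
      hM.add_mem (hM.algebraMap_mem (by positivity)) (hM.sq_mem a)⟩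
  { carrier := {a | ∃ N : ℝ, 0 < N ∧ algebraMap ℝ R N - a ∈ M ∧ algebraMap ℝ R N + a ∈ M}
    add_mem' := fun {a b} => hadd a b
    mul_mem' := fun {a b} ha hb => by
      obtain ⟨N, h0, h, h'⟩ := hadd _ _ (hsq _ (hadd _ _ ha hb)) (hneg _ (hsq _
        (hadd _ _ ha (hneg _ hb))))
      have e : a * b = algebraMap ℝ R (1 / 4) * ((a + b) ^ 2 + -(a + -b) ^ 2) := by
        have : algebraMap ℝ R (1 / 4) * 4 = 1 := by
          rw [← map_ofNat (algebraMap ℝ R) 4, ← map_mul]; norm_num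
        linear_combination (-a * b) * this
      refine ⟨1 / 4 * N, by positivity, ?_, ?_⟩
      · rw [e, map_mul, ← mul_sub]
        exact hM.algebraMap_mul_mem (by norm_num) h
      · rw [e, map_mul, ← mul_add]
        exact hM.algebraMap_mul_mem (by norm_num) h'
    algebraMap_mem' := fun r => ⟨|r| + 1, by positivity, by
      rw [← map_sub]
      exact hM.algebraMap_mem (by linarith [le_abs_self r]), by
      rw [← map_add]
      exact hM.algebraMap_mem (by linarith [neg_abs_le r])⟩ }

end IsQuadraticModule

/-- In finite dimension, the convex hull of a compact set is compact. -/
theorem IsCompact.convexHull_of_finiteDimensional {E : Type*} [NormedAddCommGroup E]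
    [NormedSpace ℝ E] [FiniteDimensional ℝ E] {s : Set E} (hs : IsCompact s) :
    IsCompact (convexHull ℝ s) := by
  have h : convexHull ℝ s = ⋃ k ∈ Set.Iic (Module.finrank ℝ E + 1),
      (fun p : (Fin k → ℝ) × (Fin k → E) => ∑ i, p.1 i • p.2 i) ''
        (stdSimplex ℝ (Fin k) ×ˢ Set.univ.pi fun _ => s) := by
    apply Set.Subset.antisymm
    · intro x hx
      obtain ⟨ι, _, z, w, hz, hind, hw, hw1, rfl⟩ := eq_pos_convex_span_of_mem_convexHull hx
      have hcard : Fintype.card ι ≤ Module.finrank ℝ E + 1 := hind.card_le_finrank_succ.trans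
        (Nat.succ_le_succ (Submodule.finrank_le _))
      let e := (Fintype.equivFin ι).symm
      refine Set.mem_iUnion₂.2 ⟨Fintype.card ι, hcard, ⟨(w ∘ e, z ∘ e), ⟨⟨fun i => (hw _).le, ?_⟩,
        fun i _ => hz ⟨_, rfl⟩⟩, ?_⟩⟩
      · rw [← hw1]; exact e.sum_comp w
      · exact e.sum_comp fun i => w i • z i
    · refine Set.iUnion₂_subset fun k _ => ?_
      rintro _ ⟨⟨w, z⟩, ⟨hw, hz⟩, rfl⟩
      exact (convex_convexHull ℝ s).sum_mem (fun i _ => hw.1 i) hw.2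
        fun i _ => subset_convexHull ℝ s (hz i trivial)
  rw [h]
  refine (Set.finite_Iic _).isCompact_biUnion fun k _ => ?_
  exact ((isCompact_stdSimplex ℝ (Fin k)).prod (isCompact_univ_pi fun _ => hs)).image (by fun_prop)

/-- A proper convex cone of a finite-dimensional space admits a nonzero nonnegative functional. -/
theorem exists_ne_zero_nonneg_of_notMem_cone {E : Type*} [NormedAddCommGroup E]
    [NormedSpace ℝ E] [FiniteDimensional ℝ E] {D : Set E} (h0 : (0 : E) ∈ D)
    (hadd : ∀ a ∈ D, ∀ b ∈ D, a + b ∈ D) (hsmul : ∀ c : ℝ, 0 ≤ c → ∀ a ∈ D, c • a ∈ D)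
    {x : E} (hx : x ∉ D) : ∃ ψ : E →ₗ[ℝ] ℝ, ψ ≠ 0 ∧ ∀ a ∈ D, 0 ≤ ψ a := by
  have hconv : Convex ℝ D := fun a ha b hb s t hs ht _ =>
    hadd _ (hsmul s hs a ha) _ (hsmul t ht b hb)
  by_cases hne : (interior D).Nonempty
  · obtain ⟨φ, hφ⟩ := geometric_hahn_banach_open_point hconv.interior isOpen_interior
      (fun h => hx (interior_subset h))
    have hle : ∀ a ∈ D, φ a ≤ φ x := by
      intro a ha
      have hcl : a ∈ closure (interior D) := by
        rw [hconv.closure_interior_eq_closure_of_nonempty_interior hne]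
        exact subset_closure ha
      exact closure_minimal (fun b hb => (hφ b hb).le)
        (isClosed_le φ.continuous continuous_const) hcl
    refine ⟨-φ.toLinearMap, ?_, fun a ha => ?_⟩
    · intro h
      obtain ⟨b, hb⟩ := hne
      have hz : ∀ y, φ y = 0 := fun y => by simpa using congrArg (fun g => g y) h
      have := hφ b hb
      rw [hz, hz] at this
      exact lt_irrefl _ this
    · by_contra! hneg
      have hpos : 0 < φ a := by simpa using hneg
      have hx0 : 0 ≤ φ x := by simpa using hle 0 h0
      have := hle _ (hsmul ((φ x + 1) / φ a) (by positivity) a ha)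
      rw [map_smul, smul_eq_mul, div_mul_cancel₀ _ hpos.ne'] at this
      linarith
  · have hspan : Submodule.span ℝ D < ⊤ := by
      rw [lt_top_iff_ne_top]
      intro htop
      apply hne
      rw [hconv.interior_nonempty_iff_affineSpan_eq_top]
      rw [← Set.insert_eq_of_mem h0, ← AffineSubspace.coe_eq_univ_iff, affineSpan_insert_zero, htop]
      rfl
    obtain ⟨ψ, hψ, hker⟩ := Submodule.exists_le_ker_of_lt_top _ hspan
    exact ⟨ψ, hψ, fun a ha => (LinearMap.mem_ker.1 (hker (Submodule.subset_span ha))).ge⟩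

section Pencil

variable {n m : ℕ}

/-- The polynomial of degree at most one with the given coefficients. -/
noncomputable def affinePoly (n : ℕ) : (Fin (n + 1) → ℝ) →ₗ[ℝ] MvPolynomial (Fin n) ℝ where
  toFun d := C (d 0) + ∑ i : Fin n, X i * C (d i.succ)
  map_add' d e := by
    simp only [Pi.add_apply, map_add, mul_add, Finset.sum_add_distrib]
    ring
  map_smul' c d := by
    simp only [Pi.smul_apply, smul_eq_mul, map_mul, RingHom.id_apply, smul_eq_C_mul, mul_add,
      Finset.mul_sum]
    exact congrArg _ (Finset.sum_congr rfl fun i _ => by ring)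

theorem affinePoly_apply (d : Fin (n + 1) → ℝ) :
    affinePoly n d = C (d 0) + ∑ i : Fin n, X i * C (d i.succ) := rfl

theorem affinePoly_single_zero (c : ℝ) : affinePoly n (Pi.single 0 c) = C c := by
  simp [affinePoly_apply]

theorem affinePoly_single_succ (i : Fin n) : affinePoly n (Pi.single i.succ 1) = X i := by
  simp [affinePoly_apply, Pi.single_apply]

theorem eval_affinePoly (x : Fin n → ℝ) (d : Fin (n + 1) → ℝ) :
    eval x (affinePoly n d) = d 0 + ∑ i : Fin n, x i * d i.succ := by
  simp [affinePoly_apply]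

theorem apply_eq_sum_coordinates (ψ : (Fin (n + 1) → ℝ) →ₗ[ℝ] ℝ) (d : Fin (n + 1) → ℝ) :
    ψ d = d 0 * ψ (Pi.single 0 1) + ∑ i : Fin n, d i.succ * ψ (Pi.single i.succ 1) := by
  rw [LinearMap.pi_apply_eq_sum_univ ψ d, Fin.sum_univ_succ]
  have h (i : Fin (n + 1)) : (fun j => if i = j then (1 : ℝ) else 0) = Pi.single i 1 := by
    ext j; simp [Pi.single_apply, eq_comm]
  simp [h]

/-- A functional that is positive at the constant `1` is a positive multiple of an evaluation. -/
theorem eval_affinePoly_of_pos {ψ : (Fin (n + 1) → ℝ) →ₗ[ℝ] ℝ} (h : 0 < ψ (Pi.single 0 1))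
    (d : Fin (n + 1) → ℝ) :
    eval (fun i => ψ (Pi.single i.succ 1) / ψ (Pi.single 0 1)) (affinePoly n d) =
      ψ d / ψ (Pi.single 0 1) := by
  rw [eval_affinePoly, apply_eq_sum_coordinates ψ d, add_div, mul_div_cancel_right₀ _ h.ne',
    Finset.sum_div]
  exact congrArg _ (Finset.sum_congr rfl fun i _ => by ring)

/-- The coefficients of the affine polynomial `uᵀ L v`, for constant vectors `u` and `v`. -/
def pencilForm (A : Fin (n + 1) → Matrix (Fin m) (Fin m) ℝ) (u v : Fin m → ℝ) :
    Fin (n + 1) → ℝ :=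
  fun i => u ⬝ᵥ (A i *ᵥ v)

variable (A : Fin (n + 1) → Matrix (Fin m) (Fin m) ℝ)

theorem vLv_eq_dotProduct (v : Fin m → MvPolynomial (Fin n) ℝ) :
    vLv A v = v ⬝ᵥ (pencilPoly A *ᵥ v) := by
  simp [vLv, dotProduct, mulVec, Finset.mul_sum, mul_assoc]

theorem affinePoly_pencilForm (u v : Fin m → ℝ) :
    affinePoly n (pencilForm A u v) =
      (fun a => C (u a)) ⬝ᵥ (pencilPoly A *ᵥ fun b => C (v b)) := by
  have h : pencilForm A u v = ∑ a, ∑ b, (u a * v b) • fun i => A i a b := by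
    ext i
    simp only [pencilForm, dotProduct, mulVec, Finset.mul_sum, Finset.sum_apply, Pi.smul_apply,
      smul_eq_mul]
    exact Finset.sum_congr rfl fun a _ => Finset.sum_congr rfl fun b _ => by ring
  rw [h]
  simp only [map_sum, map_smul, dotProduct, mulVec, Finset.mul_sum, smul_eq_C_mul, map_mul]
  refine Finset.sum_congr rfl fun a _ => Finset.sum_congr rfl fun b _ => ?_
  change _ * pencilPoly A a b = _
  ring

theorem eval_affinePoly_pencilForm (x : Fin n → ℝ) (u v : Fin m → ℝ) :
    eval x (affinePoly n (pencilForm A u v)) = u ⬝ᵥ (pencilEval A x *ᵥ v) := by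
  simp [eval_affinePoly, pencilForm, pencilEval, add_mulVec, sum_mulVec, dotProduct_add,
    dotProduct_sum, smul_mulVec]

variable {A}

theorem mem_specSet_iff (hsymm : ∀ i, (A i).IsSymm) {x : Fin n → ℝ} :
    x ∈ specSet A ↔ ∀ u, 0 ≤ eval x (affinePoly n (pencilForm A u u)) := by
  have hH : (pencilEval A x).IsHermitian := by
    simp only [pencilEval, IsHermitian, conjTranspose_eq_transpose_of_trivial, transpose_add,
      transpose_sum, transpose_smul, (hsymm _).eq]
  simp only [specSet, Set.mem_ofPred_eq, posSemidef_iff_dotProduct_mulVec, hH, true_and,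
    eval_affinePoly_pencilForm, star_trivial]

theorem pencilForm_comm (hsymm : ∀ i, (A i).IsSymm) (u v : Fin m → ℝ) :
    pencilForm A u v = pencilForm A v u := by
  ext i
  rw [pencilForm, pencilForm, dotProduct_mulVec, ← mulVec_transpose, (hsymm i).eq, dotProduct_comm]

theorem memQM.add {p p' : MvPolynomial (Fin n) ℝ} (hp : memQM A p) (hp' : memQM A p') :
    memQM A (p + p') := by
  obtain ⟨k, r, q, v, rfl⟩ := hp
  obtain ⟨k', r', q', v', rfl⟩ := hp'
  refine ⟨k + k', r + r', Fin.append q q', Fin.append v v', ?_⟩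
  simp only [Fin.sum_univ_add, Fin.append_left, Fin.append_right]
  ring

theorem memQM.sq_mul (h : MvPolynomial (Fin n) ℝ) {p : MvPolynomial (Fin n) ℝ} (hp : memQM A p) :
    memQM A (h ^ 2 * p) := by
  obtain ⟨k, r, q, v, rfl⟩ := hp
  refine ⟨k, r, fun i => h * q i, fun j => h • v j, ?_⟩
  rw [mul_add, Finset.mul_sum, Finset.mul_sum]
  congr 1
  · exact Finset.sum_congr rfl fun i _ => by ring
  · refine Finset.sum_congr rfl fun j _ => ?_
    rw [vLv_eq_dotProduct, vLv_eq_dotProduct, mulVec_smul, smul_dotProduct, dotProduct_smul]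
    simp only [smul_eq_mul]
    ring

theorem memQM_one : memQM A 1 :=
  ⟨1, 0, fun _ => 1, Fin.elim0, by simp⟩

theorem isQuadraticModule_memQM (A : Fin (n + 1) → Matrix (Fin m) (Fin m) ℝ) :
    IsQuadraticModule {p | memQM A p} where
  one_mem := memQM_one
  add_mem := memQM.add
  sq_mul_mem := memQM.sq_mul

theorem memQM_vLv (v : Fin m → MvPolynomial (Fin n) ℝ) : memQM A (vLv A v) :=
  ⟨0, 1, Fin.elim0, fun _ => v, by simp⟩

theorem memQM_affinePoly_pencilForm (u : Fin m → ℝ) :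
    memQM A (affinePoly n (pencilForm A u u)) := by
  rw [affinePoly_pencilForm, ← vLv_eq_dotProduct]
  exact memQM_vLv _

theorem vLv_smul_add (hsymm : ∀ i, (A i).IsSymm) (p : MvPolynomial (Fin n) ℝ) (u v : Fin m → ℝ) :
    vLv A (p • (fun a => C (u a)) + fun a => C (v a)) =
      p ^ 2 * affinePoly n (pencilForm A u u) + 2 * p * affinePoly n (pencilForm A u v) +
        affinePoly n (pencilForm A v v) := by
  rw [vLv_eq_dotProduct, mulVec_add, mulVec_smul]
  simp only [add_dotProduct, dotProduct_add, smul_dotProduct, dotProduct_smul, smul_eq_mul,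
    ← affinePoly_pencilForm]
  rw [pencilForm_comm hsymm v u]
  ring

/-- The subspace of vectors `u` with `L u = 0` modulo a space `W` of affine polynomials. -/
def pencilKernel (A : Fin (n + 1) → Matrix (Fin m) (Fin m) ℝ)
    (W : Submodule ℝ (Fin (n + 1) → ℝ)) : Submodule ℝ (Fin m → ℝ) where
  carrier := {u | ∀ v, pencilForm A u v ∈ W}
  add_mem' {a b} ha hb v := by
    convert W.add_mem (ha v) (hb v) using 1
    ext i
    simp [pencilForm, add_dotProduct]
  zero_mem' v := by
    convert W.zero_mem using 1
    ext i
    simp [pencilForm]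
  smul_mem' c a ha v := by
    convert W.smul_mem c (ha v) using 1
    ext i
    simp [pencilForm, smul_dotProduct]

theorem pencilForm_add_add (hsymm : ∀ i, (A i).IsSymm) (u v : Fin m → ℝ) :
    pencilForm A (u + v) (u + v) =
      pencilForm A u u + (2 : ℝ) • pencilForm A u v + pencilForm A v v := by
  have h := pencilForm_comm hsymm v u
  ext i
  have h' : v ⬝ᵥ (A i *ᵥ u) = u ⬝ᵥ (A i *ᵥ v) := congrFun h i
  simp only [pencilForm, Pi.add_apply, Pi.smul_apply, smul_eq_mul, mulVec_add, add_dotProduct,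
    dotProduct_add, h']
  ring

/-- If no point of the spectrahedron lies on the affine subspace cut out by `W`, then every
quadratic module that contains `W` and all `uᵀ L u` contains `-1` or some `-uᵀ L u` with
`L u ≠ 0` modulo `W`. -/
theorem neg_one_mem_or_exists_neg_pencilForm_mem (hsymm : ∀ i, (A i).IsSymm)
    (W : Submodule ℝ (Fin (n + 1) → ℝ))
    (hW : ∀ x ∈ specSet A, ¬ ∀ w ∈ W, eval x (affinePoly n w) = 0)
    {N : Set (MvPolynomial (Fin n) ℝ)} (hN : IsQuadraticModule N)
    (hAN : ∀ u, affinePoly n (pencilForm A u u) ∈ N) (hWN : ∀ w ∈ W, affinePoly n w ∈ N) :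
    -1 ∈ N ∨ ∃ u ∉ pencilKernel A W, -affinePoly n (pencilForm A u u) ∈ N := by
  obtain ⟨U', hU'⟩ := (pencilKernel A W).exists_isCompl
  let Z : Set (Fin (n + 1) → ℝ) :=
    insert (Pi.single 0 1) ((fun u => pencilForm A u u) '' (Metric.sphere 0 1 ∩ U'))
  have hZN : ∀ z ∈ Z, affinePoly n z ∈ N := by
    rintro z (rfl | ⟨u, -, rfl⟩)
    · rw [affinePoly_single_zero, map_one]
      exact hN.one_mem
    · exact hAN u
  have hcont : Continuous fun u : Fin m → ℝ => pencilForm A u u := by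
    unfold pencilForm
    fun_prop
  have hZ : IsCompact Z := ((((isCompact_sphere _ _).inter_right
    U'.closed_of_finiteDimensional).image hcont).insert _)
  have hdisj : ¬ Disjoint (convexHull ℝ Z) (W : Set (Fin (n + 1) → ℝ)) := by
    intro hdisj
    obtain ⟨φ, s, t, hs, hst, ht⟩ := geometric_hahn_banach_compact_closed (convex_convexHull ℝ Z)
      hZ.convexHull_of_finiteDimensional W.convex W.closed_of_finiteDimensional hdisj
    have ht0 : t < 0 := by simpa using ht 0 W.zero_mem
    have hφW : ∀ w ∈ W, φ w = 0 := by
      intro w hw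
      by_contra hne
      have := ht _ (W.smul_mem (t / φ w) hw)
      rw [map_smul, smul_eq_mul, div_mul_cancel₀ _ hne] at this
      exact lt_irrefl _ this
    have hφZ : ∀ z ∈ Z, φ z < 0 := fun z hz =>
      ((hs z (subset_convexHull ℝ Z hz)).trans hst).trans ht0
    let ψ : (Fin (n + 1) → ℝ) →ₗ[ℝ] ℝ := -φ.toLinearMap
    have hψ : ∀ d, ψ d = -φ d := fun d => rfl
    have h0 : 0 < ψ (Pi.single 0 1) := by
      simpa [hψ] using hφZ _ (Set.mem_insert _ _)
    refine hW (fun i => ψ (Pi.single i.succ 1) / ψ (Pi.single 0 1)) ?_ fun w hw => ?_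
    · rw [mem_specSet_iff hsymm]
      intro v
      rw [eval_affinePoly_of_pos h0]
      refine div_nonneg ?_ h0.le
      obtain ⟨u, hu, u', hu', rfl⟩ : ∃ u ∈ pencilKernel A W, ∃ u' ∈ U', u + u' = v :=
        Submodule.mem_sup.1 (hU'.sup_eq_top ▸ Submodule.mem_top)
      rw [pencilForm_add_add hsymm, map_add, map_add, map_smul, hψ, hψ, hφW _ (hu u),
        hφW _ (hu u')]
      rcases eq_or_ne u' 0 with rfl | hne
      · have : pencilForm A 0 0 = 0 := by ext i; simp [pencilForm]
        simp [this]
      · have hz := hφZ (pencilForm A (‖u'‖⁻¹ • u') (‖u'‖⁻¹ • u')) (Or.inr ⟨_, ⟨by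
          simp [norm_smul, hne], U'.smul_mem _ hu'⟩, rfl⟩)
        have hsm : pencilForm A (‖u'‖⁻¹ • u') (‖u'‖⁻¹ • u') =
            (‖u'‖⁻¹ * ‖u'‖⁻¹) • pencilForm A u' u' := by
          ext i; simp [pencilForm, mulVec_smul, mul_assoc]
        rw [hsm, map_smul, smul_eq_mul] at hz
        have hpos : 0 < ‖u'‖⁻¹ * ‖u'‖⁻¹ := by positivity
        have : φ (pencilForm A u' u') < 0 := by
          by_contra! hcon
          exact absurd hz (not_lt.2 (mul_nonneg hpos.le hcon))
        rw [hψ]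
        simpa using this.le
    · rw [eval_affinePoly_of_pos h0, hψ, hφW w hw]
      simp
  obtain ⟨b, hb, hbW⟩ := Set.not_disjoint_iff.1 hdisj
  obtain ⟨ι, _, w, z, hw, hw1, hz, rfl⟩ := mem_convexHull_iff_exists_fintype.1 hb
  obtain ⟨k, hk⟩ : ∃ k, 0 < w k := by
    by_contra! hcon
    have := Finset.sum_nonpos fun i (_ : i ∈ Finset.univ) => hcon i
    linarith
  have hsum : ∀ s : Finset ι, affinePoly n (∑ i ∈ s, w i • z i) ∈ N := by
    classical
    intro s
    induction s using Finset.induction_on with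
    | empty => simpa using hN.zero_mem
    | insert i s hi ih =>
      rw [Finset.sum_insert hi, map_add, map_smul]
      exact hN.add_mem (hN.smul_mem (hw i) (hZN _ (hz i))) ih
  have hneg : -affinePoly n (z k) ∈ N := by
    classical
    have h1 := hN.add_mem (hsum (Finset.univ.erase k)) (hWN _ (W.neg_mem hbW))
    have h2 := hN.smul_mem (inv_nonneg.2 (hw k)) h1
    convert h2 using 1
    rw [map_neg, ← Finset.add_sum_erase _ _ (Finset.mem_univ k), map_add, neg_add_rev,
      add_neg_cancel_left, map_smul, smul_neg, inv_smul_smul₀ hk.ne']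
  rcases hz k with h | ⟨u, ⟨hu1, huU⟩, hu⟩
  · left
    simpa [h, affinePoly_single_zero] using hneg
  · right
    refine ⟨u, fun huK => ?_, by simpa only [hu] using hneg⟩
    have hu0 : u = 0 := (Submodule.disjoint_def.1 hU'.disjoint) u huK huU
    simp [hu0] at hu1

/-- The quadratic module of a pencil with no feasible point on the affine subspace cut out by `W`
contains `-1` modulo the ideal generated by `W`. -/
theorem neg_one_mem_add_span_of_infeasible (hsymm : ∀ i, (A i).IsSymm)
    (W : Submodule ℝ (Fin (n + 1) → ℝ))
    (hW : ∀ x ∈ specSet A, ¬ ∀ w ∈ W, eval x (affinePoly n w) = 0) :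
    ∃ q, memQM A q ∧ ∃ j ∈ Ideal.span (affinePoly n '' W), -1 = q + j := by
  induction W using WellFoundedGT.induction with
  | ind W ih =>
    have hM := isQuadraticModule_memQM A
    have hN := hM.add_ideal (Ideal.span (affinePoly n '' W))
    set N := {p : MvPolynomial (Fin n) ℝ | ∃ q ∈ {p | memQM A p},
      ∃ j ∈ Ideal.span (affinePoly n '' W), p = q + j}
    have hMN : ∀ q, memQM A q → q ∈ N := fun q hq => ⟨q, hq, 0, Ideal.zero_mem _, by simp⟩
    change -1 ∈ N
    rcases neg_one_mem_or_exists_neg_pencilForm_mem hsymm W hW hN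
      (fun u => hMN _ (memQM_affinePoly_pencilForm u))
      (fun w hw => ⟨0, hM.zero_mem, _, Ideal.subset_span ⟨w, hw, rfl⟩, by simp⟩) with
      h | ⟨u, huK, hu⟩
    · exact h
    obtain ⟨v, hv⟩ : ∃ v, pencilForm A u v ∉ W := by
      by_contra! hcon
      exact huK hcon
    have hlt : W < W ⊔ Submodule.span ℝ {pencilForm A u v} := by
      refine lt_of_le_of_ne le_sup_left fun h => hv ?_
      rw [h]
      exact Submodule.mem_sup_right (Submodule.mem_span_singleton_self _)
    obtain ⟨q, hq, j', hj', e⟩ := ih _ hlt fun x hx hall =>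
      hW x hx fun w hw => hall w (Submodule.mem_sup_left hw)
    have hle : Ideal.span (affinePoly n '' (W ⊔ Submodule.span ℝ {pencilForm A u v} :
        Submodule ℝ (Fin (n + 1) → ℝ))) ≤ Ideal.span (affinePoly n '' W) ⊔
        Ideal.span {affinePoly n (pencilForm A u v)} := by
      rw [Ideal.span_le]
      rintro _ ⟨d, hd, rfl⟩
      obtain ⟨w, hw, d', hd', rfl⟩ := Submodule.mem_sup.1 hd
      obtain ⟨c, rfl⟩ := Submodule.mem_span_singleton.1 hd'
      rw [map_add, map_smul, smul_eq_C_mul]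
      exact Ideal.add_mem _ (Ideal.mem_sup_left (Ideal.subset_span ⟨w, hw, rfl⟩))
        (Ideal.mem_sup_right (Ideal.mul_mem_left _ _ (Ideal.mem_span_singleton_self _)))
    obtain ⟨j, hj, _, hj₂, rfl⟩ := Submodule.mem_sup.1 (hle hj')
    obtain ⟨g, rfl⟩ := Ideal.mem_span_singleton'.1 hj₂
    set l := affinePoly n (pencilForm A v v)
    set η := affinePoly n (pencilForm A u v)
    have hcross (p : MvPolynomial (Fin n) ℝ) : l + 2 * p * η ∈ N := by
      have := hN.add_mem (hMN _ (memQM_vLv (p • (fun a => C (u a)) + fun a => C (v a))))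
        (hN.sq_mul_mem p hu)
      rw [vLv_smul_add hsymm] at this
      convert this using 1
      ring
    have hqj : q + j ∈ N := ⟨q, hq, j, hj, rfl⟩
    have h2 : (C (1 / 2) : MvPolynomial (Fin n) ℝ) * 2 = 1 := by
      rw [← map_ofNat (C (σ := Fin n)) 2, ← map_mul]; norm_num
    have hsq := hN.add_mem (hN.add_mem (hcross (C (1 / 2) * (l + 1) ^ 2 * g))
      (hN.sq_mul_mem (l + 1) hqj)) (hN.sq_mem (l + C (1 / 2)))
    refine hN.neg_one_mem_of_algebraMap_mem (c := -(3 / 4)) (by norm_num) ?_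
    convert hsq using 1
    have h34 : (algebraMap ℝ (MvPolynomial (Fin n) ℝ) (-(3 / 4))) = C (1 / 2) ^ 2 - 1 := by
      rw [← map_pow, ← map_one C, ← map_sub, algebraMap_eq]; norm_num
    rw [h34]
    linear_combination (l + 1) ^ 2 * e - ((l + 1) ^ 2 * g * η + l) * h2

theorem neg_one_memQM_of_specSet_eq_empty (hsymm : ∀ i, (A i).IsSymm) (h : specSet A = ∅) :
    memQM A (-1) := by
  obtain ⟨q, hq, j, hj, e⟩ := neg_one_mem_add_span_of_infeasible hsymm ⊥ (by simp [h])
  have hj0 : j = 0 := by simpa using hj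
  rwa [e, hj0, add_zero]

/-- For a nonempty bounded spectrahedron, affine polynomials are bounded above modulo the
quadratic module. -/
theorem exists_C_sub_affinePoly_memQM (hsymm : ∀ i, (A i).IsSymm)
    (hbdd : Bornology.IsBounded (specSet A)) (hne : (specSet A).Nonempty)
    (d : Fin (n + 1) → ℝ) : ∃ N : ℝ, memQM A (C N - affinePoly n d) := by
  have hM := isQuadraticModule_memQM A
  by_contra! hcon
  let D : Set (Fin (n + 1) → ℝ) := {e | ∃ N : ℝ, memQM A (C N + affinePoly n e)}
  have hd : -d ∉ D := by
    rintro ⟨N, hN⟩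
    rw [map_neg, ← sub_eq_add_neg] at hN
    exact hcon N hN
  obtain ⟨ψ, hψ, hψD⟩ := exists_ne_zero_nonneg_of_notMem_cone (D := D)
    ⟨0, by simpa using hM.zero_mem⟩
    (fun a ⟨N, hN⟩ b ⟨N', hN'⟩ => ⟨N + N', by
      convert hN.add hN' using 1
      rw [map_add, map_add]; ring⟩)
    (fun c hc a ⟨N, hN⟩ => ⟨c * N, by
      have : memQM A (c • (C N + affinePoly n a)) := hM.smul_mem hc hN
      rwa [smul_add, smul_eq_C_mul, ← map_mul, ← map_smul] at this⟩) hd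
  have hψ0 : ψ (Pi.single 0 1) = 0 := by
    have hc (c : ℝ) : 0 ≤ c * ψ (Pi.single 0 1) := by
      have := hψD (Pi.single 0 c) ⟨-c, by
        rw [affinePoly_single_zero, ← map_add, neg_add_cancel, map_zero]
        exact hM.zero_mem⟩
      rwa [← mul_one c, ← smul_eq_mul, Pi.single_smul, map_smul, smul_eq_mul] at this
    linarith [hc 1, hc (-1)]
  let y : Fin n → ℝ := fun i => ψ (Pi.single i.succ 1)
  have heval (x : Fin n → ℝ) (t : ℝ) (e : Fin (n + 1) → ℝ) :
      eval (x + t • y) (affinePoly n e) = eval x (affinePoly n e) + t * ψ e := by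
    rw [eval_affinePoly, eval_affinePoly, apply_eq_sum_coordinates ψ e, hψ0]
    simp only [Pi.add_apply, Pi.smul_apply, smul_eq_mul, add_mul, Finset.sum_add_distrib, y,
      mul_zero, zero_add, Finset.mul_sum, add_assoc]
    exact congrArg _ (congrArg _ (Finset.sum_congr rfl fun i _ => by ring))
  have hy : y ≠ 0 := by
    intro hy
    apply hψ
    have hy' (i : Fin n) : ψ (Pi.single i.succ 1) = 0 := congrFun hy i
    refine LinearMap.ext fun z => ?_
    rw [apply_eq_sum_coordinates ψ]
    simp [hψ0, hy']
  obtain ⟨x, hx⟩ := hne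
  obtain ⟨B, hB⟩ := hbdd.exists_norm_le
  have hray (t : ℝ) (ht : 0 ≤ t) : x + t • y ∈ specSet A := by
    rw [mem_specSet_iff hsymm] at hx ⊢
    intro u
    rw [heval]
    exact add_nonneg (hx u) (mul_nonneg ht (hψD _ ⟨0, by
      simpa using memQM_affinePoly_pencilForm u⟩))
  have hypos : 0 < ‖y‖ := norm_pos_iff.2 hy
  have hB0 : 0 ≤ B := (norm_nonneg _).trans (hB x hx)
  have h1 := hB _ (hray ((B + ‖x‖ + 1) / ‖y‖) (by positivity))
  have h2 : ‖((B + ‖x‖ + 1) / ‖y‖) • y‖ = B + ‖x‖ + 1 := by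
    rw [norm_smul, Real.norm_of_nonneg (by positivity), div_mul_cancel₀ _ hypos.ne']
  have h3 := norm_sub_le (x + ((B + ‖x‖ + 1) / ‖y‖) • y) x
  rw [add_sub_cancel_left, h2] at h3
  linarith

/-- The quadratic module of a pencil with bounded spectrahedron is archimedean. -/
theorem isArchimedeanModule_memQM (hsymm : ∀ i, (A i).IsSymm)
    (hbdd : Bornology.IsBounded (specSet A)) : IsArchimedeanModule {p | memQM A p} := by
  have hM := isQuadraticModule_memQM A
  rcases (specSet A).eq_empty_or_nonempty with hempty | hne
  · exact fun a => ⟨0, hM.mem_of_neg_one_mem (neg_one_memQM_of_specSet_eq_empty hsymm hempty) _⟩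
  have htop : hM.boundedSubalgebra = ⊤ := by
    rw [eq_top_iff, ← adjoin_range_X, Algebra.adjoin_le_iff]
    rintro _ ⟨i, rfl⟩
    obtain ⟨N, hN⟩ := exists_C_sub_affinePoly_memQM hsymm hbdd hne (Pi.single i.succ 1)
    obtain ⟨N', hN'⟩ := exists_C_sub_affinePoly_memQM hsymm hbdd hne (-Pi.single i.succ 1)
    rw [affinePoly_single_succ] at hN
    rw [map_neg, affinePoly_single_succ] at hN'
    refine ⟨|N| + |N'| + 1, by positivity, ?_, ?_⟩
    · convert hM.add_mem hN (hM.algebraMap_mem (c := |N| + |N'| + 1 - N)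
        (by linarith [le_abs_self N, abs_nonneg N'])) using 1
      rw [map_sub, algebraMap_eq]; ring
    · convert hM.add_mem hN' (hM.algebraMap_mem (c := |N| + |N'| + 1 - N')
        (by linarith [le_abs_self N', abs_nonneg N])) using 1
      rw [map_sub, algebraMap_eq]; ring
  intro a
  obtain ⟨N, -, hN, -⟩ := (htop ▸ Algebra.mem_top : a ∈ hM.boundedSubalgebra)
  exact ⟨N, hN⟩

end Pencil

/-- **Putinar-type Positivstellensatz for bounded spectrahedra.** If `L` is a linear pencil
whose spectrahedron `S_L` is bounded and `f` is a polynomial with `f > 0` on `S_L`,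
then `f ∈ M_L`. -/
theorem mem_quadraticModule_of_pos_on_bounded_spectrahedron
    (n m : ℕ) (A : Fin (n+1) → Matrix (Fin m) (Fin m) ℝ)
    (hsymm : ∀ i, (A i).IsSymm)
    (hbdd : Bornology.IsBounded (specSet A))
    (f : MvPolynomial (Fin n) ℝ)
    (hf : ∀ x ∈ specSet A, 0 < MvPolynomial.eval x f) :
    memQM A f := by
  refine (isQuadraticModule_memQM A).mem_of_forall_algHom_pos
    (isArchimedeanModule_memQM hsymm hbdd) fun φ hφ => ?_
  have hφ_eval : ∀ p, φ p = eval (fun i => φ (X i)) p := fun p => by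
    conv_lhs => rw [aeval_unique φ]
    rw [aeval_eq_eval]
    rfl
  rw [hφ_eval]
  refine hf _ ((mem_specSet_iff hsymm).2 fun u => ?_)
  rw [← hφ_eval]
  exact hφ _ (memQM_affinePoly_pencilForm u)
end
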